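/- If m, n ≥ 2 and m + n is odd, then aw(P_m □ P_n, 3) = 4; that is, every exact 4-coloring of the grid P_m □ P_n contains a rainbow 3-AP, while some exact 3-coloring does not. -/

import Mathlib

open SimpleGraph

/-- `v` lists the vertices of a `k`-term arithmetic progression in `G`:
consecutive vertices are at a common distance `d`. -/
def IsAPIn {V : Type*} (G : SimpleGraph V) (k : ℕ) (v : Fin k → V) : Prop :=
  ∃ d : ℕ, ∀ (i : ℕ) (h : i + 1 < k),
    G.dist (v ⟨i, by omega⟩) (v ⟨i + 1, h⟩) = d

/-- The coloring `c` admits a rainbow `k`-AP in `G`: a `k`-AP whose vertices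
are pairwise distinct and receive pairwise distinct colors. -/
def HasRainbowAP {V α : Type*} (G : SimpleGraph V) (k : ℕ) (c : V → α) : Prop :=
  ∃ v : Fin k → V, IsAPIn G k v ∧ Function.Injective (c ∘ v)

/-- The anti-van der Waerden number `aw(G,k)`: the least positive `r` such that
every exact `r`-coloring of `G` contains a rainbow `k`-AP.  (For `r = |V(G)|+1`
there is no surjection onto `r` colors, so the defining set is nonempty and
`aw(G,k) ≤ |V(G)|+1` automatically, matching the convention.) -/
noncomputable def aw {V : Type*} [Fintype V] (G : SimpleGraph V) (k : ℕ) : ℕ :=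
  sInf {r : ℕ | 0 < r ∧ ∀ c : V → Fin r, Function.Surjective c → HasRainbowAP G k c}


def dd (x1 y1 x2 y2 : ℕ) : ℕ := (x1-x2)+(x2-x1)+((y1-y2)+(y2-y1))

def RF (f : ℕ → ℕ → Fin 4) (m n : ℕ) : Prop :=
  ∀ x1 y1 x2 y2 x3 y3, x1 ≤ m → y1 ≤ n → x2 ≤ m → y2 ≤ n → x3 ≤ m → y3 ≤ n →
    dd x2 y2 x1 y1 = dd x2 y2 x3 y3 →
    f x1 y1 = f x2 y2 ∨ f x3 y3 = f x2 y2 ∨ f x1 y1 = f x3 y3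

def Onto (f : ℕ → ℕ → Fin 4) (m n : ℕ) : Prop :=
  ∀ k, ∃ x y, x ≤ m ∧ y ≤ n ∧ f x y = k

theorem RF.transp {f m n} (h : RF f m n) : RF (fun x y => f y x) n m := by
  intro x1 y1 x2 y2 x3 y3 h1 h2 h3 h4 h5 h6 e
  exact h y1 x1 y2 x2 y3 x3 h2 h1 h4 h3 h6 h5 (by unfold dd at *; omega)
theorem Onto.transp {f m n} (h : Onto f m n) : Onto (fun x y => f y x) n m := by
  intro k
  obtain ⟨x, y, h1, h2, h3⟩ := h k
  exact ⟨y, x, h2, h1, h3⟩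
theorem RF.refl {f m n} (h : RF f m n) : RF (fun x y => f (m - x) y) m n := by
  intro x1 y1 x2 y2 x3 y3 h1 h2 h3 h4 h5 h6 e
  exact h (m-x1) y1 (m-x2) y2 (m-x3) y3 (by omega) h2 (by omega) h4 (by omega) h6
    (by unfold dd at *; omega)
theorem Onto.refl {f m n} (h : Onto f m n) : Onto (fun x y => f (m - x) y) m n := by
  intro k
  obtain ⟨x, y, h1, h2, h3⟩ := h k
  exact ⟨m - x, y, by omega, h2, by simpa [Nat.sub_sub_self h1] using h3⟩

theorem fin4_three (a b c : Fin 4) : ∃ k, k ≠ a ∧ k ≠ b ∧ k ≠ c := by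
  revert a b c; decide

theorem opp_aux {f m n} (hm : 1 ≤ m) (hmn : m ≤ n) (h : RF f m n) (ho : Onto f m n)
    (hA : ∀ x y, x ≤ m → y ≤ n → f x y = f 0 0 → x = 0 ∧ y = 0)
    (hB : ∀ x y, x ≤ m → y ≤ n → f x y = f m n → x = m ∧ y = n) : False := by
  obtain ⟨k, k1, k2, k3⟩ := fin4_three (f 0 0) (f m n) (f 0 n)
  obtain ⟨x, y, hx, hy, rfl⟩ := ho k
  -- points with equal coordinate sum
  have key : ∀ x y x' y', x ≤ m → y ≤ n → x' ≤ m → y' ≤ n → x + y = x' + y' → 0 < x + y →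
      f x y = f x' y' := by
    intro x y x' y' a1 a2 a3 a4 e e0
    rcases h x y 0 0 x' y' a1 a2 (by omega) (by omega) a3 a4 (by unfold dd; omega) with q | q | q
    · have := hA _ _ a1 a2 q; omega
    · have := hA _ _ a3 a4 q; omega
    · exact q
  have n0 : 0 < x + y := by
    by_contra hc
    obtain ⟨rfl, rfl⟩ : x = 0 ∧ y = 0 := by omega
    exact k1 rfl
  have n1 : x + y < m + n := by
    by_contra hc
    obtain ⟨rfl, rfl⟩ : x = m ∧ y = n := by omega
    exact k2 rfl
  have two : 3 ≤ m + n := by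
    by_contra hc
    exact k3 (key x y 0 n hx hy (by omega) le_rfl (by omega) n0)
  have low : ∀ s, 1 ≤ s → s ≤ n → f 0 s = f 1 1 := by
    intro s s1 s2
    rcases h 0 0 0 s 1 1 (by omega) (by omega) (by omega) (by omega) (by omega) (by omega)
      (by unfold dd; omega) with q | q | q
    · have := hA 0 s (by omega) (by omega) q.symm; omega
    · exact q.symm
    · have := hA 1 1 (by omega) (by omega) q.symm; omega
  have high : ∀ s, s < n → f m s = f (m-1) (n-1) := by
    intro s s2
    rcases h m n m s (m-1) (n-1) (by omega) (by omega) (by omega) (by omega) (by omega) (by omega)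
      (by unfold dd; omega) with q | q | q
    · have := hB m s (by omega) (by omega) q.symm; omega
    · exact q.symm
    · have := hB (m-1) (n-1) (by omega) (by omega) q.symm; omega
  apply k3
  rcases le_total (x + y) n with c | c
  · rw [key x y 0 (x+y) hx hy (by omega) c (by omega) n0, low _ n0 c, low n (by omega) le_rfl]
  · rw [key x y m (x+y-m) hx hy (by omega) (by omega) (by omega) n0, high _ (by omega),
      key 0 n m (n-m) (by omega) (by omega) (by omega) (by omega) (by omega) (by omega),
      high _ (by omega)]

theorem opp {f m n} (hm : 1 ≤ m) (hn : 1 ≤ n) (h : RF f m n) (ho : Onto f m n)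
    (hA : ∀ x y, x ≤ m → y ≤ n → f x y = f 0 0 → x = 0 ∧ y = 0)
    (hB : ∀ x y, x ≤ m → y ≤ n → f x y = f m n → x = m ∧ y = n) : False := by
  rcases le_total m n with c | c
  · exact opp_aux hm c h ho hA hB
  · exact opp_aux hn c h.transp ho.transp (fun x y a b e => (hA y x b a e).symm)
      (fun x y a b e => (hB y x b a e).symm)

theorem corner {f m n} (hm : 1 ≤ m) (hn : 1 ≤ n) (h : RF f m n) (ho : Onto f m n) (A R : Fin 4)
    (hAR : A ≠ R)
    (hA : ∀ x y, x ≤ m → y ≤ n → f x y = A → x = 0 ∧ y = 0)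
    (hR : ∀ x y, x ≤ m → y ≤ n → f x y = R → x = m) : False := by
  have hA0 : f 0 0 = A := by
    obtain ⟨x, y, hx, hy, e⟩ := ho A
    obtain ⟨rfl, rfl⟩ := hA x y hx hy e
    exact e
  have hR' : ∀ x y, x ≤ m → y ≤ n → f x y = R → x = m ∧ y = n := by
    intro x y hx hy e
    obtain rfl := hR x y hx hy e
    refine ⟨rfl, ?_⟩
    by_contra hc
    have h1 := h x y 0 0 (x-1) (y+1) hx hy (by omega) (by omega) (by omega) (by omega)
      (by unfold dd; omega)
    rw [hA0, e] at h1
    rcases h1 with q | q | q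
    · exact hAR q.symm
    · have := hA _ _ (by omega) (by omega) q; omega
    · have := hR _ _ (by omega) (by omega) q.symm; omega
  have hR0 : f m n = R := by
    obtain ⟨x, y, hx, hy, e⟩ := ho R
    obtain ⟨rfl, rfl⟩ := hR' x y hx hy e
    exact e
  exact opp hm hn h ho (by rwa [hA0]) (by rwa [hR0])

theorem strip_aux {f n} (hn : 2 ≤ n) (h : RF f 1 n) (ho : Onto f 1 n) (D U : Fin 4)
    (hD : ∀ x y, x ≤ 1 → y ≤ n → f x y = D → y = 0)
    (hU : ∀ x y, x ≤ 1 → y ≤ n → f x y = U → y = n) (h0 : f 0 0 = D) : False := by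
  have hDU : D ≠ U := by
    rintro rfl
    have := hU 0 0 (by omega) (by omega) h0; omega
  have hU1 : f 0 n ≠ U := by
    intro e
    have h1 := h 0 n 0 0 1 (n-1) (by omega) (by omega) (by omega) (by omega) (by omega) (by omega)
      (by unfold dd; omega)
    rw [h0, e] at h1
    rcases h1 with q | q | q
    · exact hDU q.symm
    · have := hD _ _ (by omega) (by omega) q; omega
    · have := hU _ _ (by omega) (by omega) q.symm; omega
  have hU2 : f 1 n = U := by
    obtain ⟨x, y, hx, hy, e⟩ := ho U
    obtain rfl := hU x y hx hy e
    obtain rfl | rfl : x = 0 ∨ x = 1 := by omega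
    · exact absurd e hU1
    · exact e
  have hD1 : f 1 0 ≠ D := by
    intro e
    have h1 := h 1 0 1 n 0 1 (by omega) (by omega) (by omega) (by omega) (by omega) (by omega)
      (by unfold dd; omega)
    rw [hU2, e] at h1
    rcases h1 with q | q | q
    · exact hDU q
    · have := hU _ _ (by omega) (by omega) q; omega
    · have := hD _ _ (by omega) (by omega) q.symm; omega
  refine corner (m := n) (n := 1) (by omega) (by omega) h.transp ho.transp D U hDU ?_
    (fun x y a b e => hU y x b a e)
  intro x y hx hy e
  obtain rfl := hD y x hy hx e
  obtain rfl | rfl : y = 0 ∨ y = 1 := by omega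
  · exact ⟨rfl, rfl⟩
  · exact absurd e hD1

theorem strip {f n} (hn : 2 ≤ n) (h : RF f 1 n) (ho : Onto f 1 n) (D U : Fin 4)
    (hD : ∀ x y, x ≤ 1 → y ≤ n → f x y = D → y = 0)
    (hU : ∀ x y, x ≤ 1 → y ≤ n → f x y = U → y = n) : False := by
  obtain ⟨x, y, hx, hy, e⟩ := ho D
  obtain rfl := hD x y hx hy e
  obtain rfl | rfl : x = 0 ∨ x = 1 := by omega
  · exact strip_aux hn h ho D U hD hU e
  · exact strip_aux hn h.refl ho.refl D U (fun x y a b e => hD _ y (by omega) b e)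
      (fun x y a b e => hU _ y (by omega) b e) (by simpa using e)

theorem fin4_all (k a b c d : Fin 4) (h1 : a ≠ b) (h2 : a ≠ c) (h3 : a ≠ d) (h4 : b ≠ c)
    (h5 : b ≠ d) (h6 : c ≠ d) : k = a ∨ k = b ∨ k = c ∨ k = d := by
  omega

theorem right_color {f m n} (hm : 1 ≤ m)
    (ih : RF f (m-1) n → ¬ Onto f (m-1) n) (h : RF f m n) :
    ∃ R, ∀ x y, x ≤ m → y ≤ n → f x y = R → x = m := by
  have := ih (fun x1 y1 x2 y2 x3 y3 h1 h2 h3 h4 h5 h6 e =>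
    h x1 y1 x2 y2 x3 y3 (by omega) h2 (by omega) h4 (by omega) h6 e)
  unfold Onto at this
  push Not at this
  obtain ⟨R, hR⟩ := this
  refine ⟨R, fun x y hx hy e => ?_⟩
  by_contra hc
  exact hR x y (by omega) hy e

theorem left_color {f m n} (hm : 1 ≤ m)
    (ih : ∀ f, RF f (m-1) n → ¬ Onto f (m-1) n) (h : RF f m n) :
    ∃ R, ∀ x y, x ≤ m → y ≤ n → f x y = R → x = 0 := by
  obtain ⟨R, hR⟩ := right_color hm (ih _) h.refl
  refine ⟨R, fun x y hx hy e => ?_⟩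
  have := hR (m-x) y (by omega) hy (by simpa [Nat.sub_sub_self hx] using e)
  omega

theorem square {f} (h : RF f 1 1) (ho : Onto f 1 1) : False := by
  have h1 := h 0 0 0 1 1 1 (by omega) (by omega) (by omega) (by omega) (by omega) (by omega) rfl
  obtain ⟨k, k1, k2, k3⟩ : ∃ k, (k ≠ f 1 0) ∧ (∀ z, z = f 0 0 ∨ z = f 0 1 ∨ z = f 1 1 → k ≠ z) ∧ True := by
    rcases h1 with q | q | q
    · obtain ⟨k, a, b, c⟩ := fin4_three (f 1 0) (f 0 0) (f 1 1); exact ⟨k, by grind⟩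
    · obtain ⟨k, a, b, c⟩ := fin4_three (f 1 0) (f 0 0) (f 0 1); exact ⟨k, by grind⟩
    · obtain ⟨k, a, b, c⟩ := fin4_three (f 1 0) (f 0 0) (f 0 1); exact ⟨k, by grind⟩
  obtain ⟨x, y, hx, hy, e⟩ := ho k
  obtain rfl | rfl : x = 0 ∨ x = 1 := by omega
  all_goals obtain rfl | rfl : y = 0 ∨ y = 1 := by omega
  all_goals grind

theorem grid_main (N : ℕ) : ∀ m n f, m + n = N → 1 ≤ m → 1 ≤ n → RF f m n → ¬ Onto f m n := by
  induction N using Nat.strong_induction_on with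
  | _ N ih =>
  intro m n f hN hm hn h ho
  have X : 2 ≤ m → ∃ L R, (∀ x y, x ≤ m → y ≤ n → f x y = L → x = 0) ∧
      (∀ x y, x ≤ m → y ≤ n → f x y = R → x = m) := by
    intro h2
    have ih' := fun f => ih (m - 1 + n) (by omega) (m-1) n f rfl (by omega) hn
    obtain ⟨L, hL⟩ := left_color hm ih' h
    obtain ⟨R, hR⟩ := right_color hm (ih' _) h
    exact ⟨L, R, hL, hR⟩
  have Y : 2 ≤ n → ∃ D U, (∀ x y, x ≤ m → y ≤ n → f x y = D → y = 0) ∧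
      (∀ x y, x ≤ m → y ≤ n → f x y = U → y = n) := by
    intro h2
    have ih' := fun f => ih (n - 1 + m) (by omega) (n-1) m f rfl (by omega) hm
    obtain ⟨L, hL⟩ := left_color hn ih' h.transp
    obtain ⟨R, hR⟩ := right_color hn (ih' _) h.transp
    exact ⟨L, R, fun x y a b e => hL y x b a e, fun x y a b e => hR y x b a e⟩
  obtain rfl | m2 : m = 1 ∨ 2 ≤ m := by omega
  · obtain rfl | n2 : n = 1 ∨ 2 ≤ n := by omega
    · exact square h ho
    · obtain ⟨D, U, hD, hU⟩ := Y n2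
      exact strip n2 h ho D U hD hU
  obtain ⟨L, R, hL, hR⟩ := X m2
  obtain rfl | n2 : n = 1 ∨ 2 ≤ n := by omega
  · exact strip m2 h.transp ho.transp L R (fun x y a b e => hL y x b a e)
      (fun x y a b e => hR y x b a e)
  obtain ⟨D, U, hD, hU⟩ := Y n2
  have hLR : L ≠ R := by
    rintro rfl
    obtain ⟨x, y, hx, hy, e⟩ := ho L
    have := hL x y hx hy e
    have := hR x y hx hy e
    omega
  have hDU : D ≠ U := by
    rintro rfl
    obtain ⟨x, y, hx, hy, e⟩ := ho D
    have := hD x y hx hy e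
    have := hU x y hx hy e
    omega
  have ry := h.transp.refl.transp
  have oy := ho.transp.refl.transp
  have c1 : L ≠ D := by
    rintro rfl
    exact corner hm hn h ho L R hLR (fun x y a b e => ⟨hL x y a b e, hD x y a b e⟩) hR
  have c2 : L ≠ U := by
    rintro rfl
    refine corner hm hn ry oy L R hLR (fun x y a b e => ⟨hL _ _ a (by omega) e, ?_⟩)
      (fun x y a b e => hR _ _ a (by omega) e)
    have := hU _ _ a (by omega) e
    omega
  have c3 : R ≠ D := by
    rintro rfl
    refine corner hm hn h.refl ho.refl R L hLR.symm (fun x y a b e => ⟨?_, hD _ _ (by omega) b e⟩)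
      (fun x y a b e => ?_)
    · have := hR _ _ (by omega) b e
      omega
    · have := hL _ _ (by omega) b e
      omega
  have c4 : R ≠ U := by
    rintro rfl
    refine corner hm hn ry.refl oy.refl R L hLR.symm (fun x y a b e => ⟨?_, ?_⟩)
      (fun x y a b e => ?_)
    · have := hR _ _ (by omega) (by omega) e
      omega
    · have := hU _ _ (by omega) (by omega) e
      omega
    · have := hL _ _ (by omega) (by omega) e
      omega
  rcases fin4_all (f 1 1) L R D U hLR c1 c2 c3 c4 hDU with q | q | q | q
  · have := hL 1 1 hm hn q; omega
  · have := hR 1 1 hm hn q; omega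
  · have := hD 1 1 hm hn q; omega
  · have := hU 1 1 hm hn q; omega

theorem path_dist_le {n : ℕ} (d : ℕ) : ∀ a b : Fin n, a.val + d = b.val →
    (pathGraph n).dist a b ≤ d := by
  induction d with
  | zero =>
    intro a b h
    have : a = b := Fin.ext (by omega)
    subst this
    simp
  | succ d ih =>
    intro a b h
    have hb := b.isLt
    let c : Fin n := ⟨a.val + d, by omega⟩
    have h1 := ih a c rfl
    have h2 : (pathGraph n).Adj c b := by
      rw [pathGraph_adj]; left; simp only [c]; omega
    have h3 := SimpleGraph.dist_eq_one_iff_adj.2 h2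
    have h4 := (pathGraph_preconnected n a c).dist_triangle_left b
    omega

theorem path_walk {n : ℕ} {a b : Fin n} (p : (pathGraph n).Walk a b) :
    (a.val - b.val) + (b.val - a.val) ≤ p.length := by
  induction p with
  | nil => simp
  | cons h p ih =>
    rw [pathGraph_adj] at h
    rw [SimpleGraph.Walk.length_cons]
    omega

theorem path_dist {n : ℕ} (a b : Fin n) :
    (pathGraph n).dist a b = (a.val - b.val) + (b.val - a.val) := by
  apply le_antisymm
  · rcases le_total a.val b.val with h | h
    · have := path_dist_le (b.val - a.val) a b (by omega)
      omega
    · have := path_dist_le (a.val - b.val) b a (by omega)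
      rw [SimpleGraph.dist_comm]
      omega
  · obtain ⟨p, hp⟩ := (pathGraph_preconnected n a b).exists_walk_length_eq_dist
    rw [← hp]
    exact path_walk p

theorem grid_dist {m n : ℕ} (a b : Fin m × Fin n) :
    (pathGraph m □ pathGraph n).dist a b = dd a.1 a.2 b.1 b.2 := by
  have h := SimpleGraph.edist_boxProd (G := pathGraph m) (H := pathGraph n) a b
  have h1 := (pathGraph_preconnected m a.1 b.1).coe_dist_eq_edist
  have h2 := (pathGraph_preconnected n a.2 b.2).coe_dist_eq_edist
  rw [← h1, ← h2, path_dist, path_dist] at h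
  unfold SimpleGraph.dist
  rw [h]
  unfold dd
  norm_cast

theorem rainbow_iff {m n r : ℕ} (c : Fin m × Fin n → Fin r) :
    HasRainbowAP (pathGraph m □ pathGraph n) 3 c ↔ ∃ u v w : Fin m × Fin n,
      dd v.1 v.2 u.1 u.2 = dd v.1 v.2 w.1 w.2 ∧ c u ≠ c v ∧ c w ≠ c v ∧ c u ≠ c w := by
  constructor
  · rintro ⟨v, ⟨d, hd⟩, hi⟩
    refine ⟨v 0, v 1, v 2, ?_, ?_, ?_, ?_⟩
    · have h0 := hd 0 (by omega)
      have h1 := hd 1 (by omega)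
      rw [← grid_dist, ← grid_dist, SimpleGraph.dist_comm]
      exact h0.trans h1.symm
    · intro e; exact absurd (hi e) (by decide)
    · intro e; exact absurd (hi e) (by decide)
    · intro e; exact absurd (hi e) (by decide)
  · rintro ⟨u, v, w, hd, h1, h2, h3⟩
    refine ⟨![u, v, w], ⟨dd v.1 v.2 w.1 w.2, ?_⟩, ?_⟩
    · intro i hi
      obtain rfl | rfl : i = 0 ∨ i = 1 := by omega
      · change (pathGraph m □ pathGraph n).dist u v = _
        rw [SimpleGraph.dist_comm, grid_dist, hd]
      · change (pathGraph m □ pathGraph n).dist v w = _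
        rw [grid_dist]
    · intro i j e
      fin_cases i <;> fin_cases j <;> first | rfl | (exfalso; simp at e; grind)

theorem four_rainbow {m n : ℕ} (hm : 2 ≤ m) (hn : 2 ≤ n) (c : Fin m × Fin n → Fin 4)
    (hc : Function.Surjective c) : HasRainbowAP (pathGraph m □ pathGraph n) 3 c := by
  by_contra hr
  rw [rainbow_iff] at hr
  let f : ℕ → ℕ → Fin 4 := fun x y => if h : x < m ∧ y < n then c (⟨x, h.1⟩, ⟨y, h.2⟩) else 0
  have hf : ∀ x y (h1 : x < m) (h2 : y < n), f x y = c (⟨x, h1⟩, ⟨y, h2⟩) := by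
    intro x y h1 h2
    simp [f, h1, h2]
  refine grid_main _ (m-1) (n-1) f rfl (by omega) (by omega) ?_ ?_
  · intro x1 y1 x2 y2 x3 y3 h1 h2 h3 h4 h5 h6 e
    rw [hf x1 y1 (by omega) (by omega), hf x2 y2 (by omega) (by omega),
      hf x3 y3 (by omega) (by omega)]
    by_contra hcon
    push Not at hcon
    exact hr ⟨_, _, _, e, hcon⟩
  · intro k
    obtain ⟨⟨x, y⟩, rfl⟩ := hc k
    refine ⟨x, y, by omega, by omega, ?_⟩
    rw [hf _ _ x.isLt y.isLt]

theorem three_free {m n : ℕ} (hm : 2 ≤ m) (hn : 2 ≤ n) (hodd : Odd (m + n)) :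
    ∃ c : Fin m × Fin n → Fin 3, Function.Surjective c ∧
      ¬ HasRainbowAP (pathGraph m □ pathGraph n) 3 c := by
  let c : Fin m × Fin n → Fin 3 := fun v =>
    if v.1.val + v.2.val = 0 then 0 else if v.1.val + v.2.val = m + n - 2 then 1 else 2
  have c0 : ∀ v, c v = 0 ↔ v.1.val + v.2.val = 0 := by
    intro v; simp only [c]; split_ifs <;> simp_all
  have c1 : ∀ v, c v = 1 ↔ v.1.val + v.2.val = m + n - 2 := by
    intro v; simp only [c]; split_ifs <;> simp_all <;> omega
  have c2 : ∀ v, c v = 2 ↔ v.1.val + v.2.val ≠ 0 ∧ v.1.val + v.2.val ≠ m + n - 2 := by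
    intro v; simp only [c]; split_ifs <;> simp_all
  refine ⟨c, ?_, ?_⟩
  · intro k
    fin_cases k
    · exact ⟨(⟨0, by omega⟩, ⟨0, by omega⟩), (c0 _).2 rfl⟩
    · exact ⟨(⟨m-1, by omega⟩, ⟨n-1, by omega⟩), (c1 _).2 (by simp only []; omega)⟩
    · exact ⟨(⟨0, by omega⟩, ⟨1, by omega⟩), (c2 _).2 (by simp only []; rcases hodd; omega)⟩
  · rw [rainbow_iff]
    rintro ⟨u, v, w, hd, h1, h2, h3⟩
    obtain ⟨k, hk⟩ := hodd
    have T : ∀ a b d : Fin 3, a ≠ b → d ≠ b → a ≠ d →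
      (a = 0 ∧ b = 1 ∧ d = 2) ∨ (a = 0 ∧ b = 2 ∧ d = 1) ∨ (a = 1 ∧ b = 0 ∧ d = 2) ∨
      (a = 1 ∧ b = 2 ∧ d = 0) ∨ (a = 2 ∧ b = 0 ∧ d = 1) ∨ (a = 2 ∧ b = 1 ∧ d = 0) := by decide
    have := T _ _ _ h1 h2 h3
    simp only [c0, c1, c2] at this
    unfold dd at hd
    have := u.1.isLt
    have := u.2.isLt
    have := v.1.isLt
    have := v.2.isLt
    have := w.1.isLt
    have := w.2.isLt
    omega

theorem small_free {m n r : ℕ} (hm : 2 ≤ m) (hn : 2 ≤ n) (h0 : 0 < r) (hr : r < 3) :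
    ∃ c : Fin m × Fin n → Fin r, Function.Surjective c ∧
      ¬ HasRainbowAP (pathGraph m □ pathGraph n) 3 c := by
  refine ⟨fun v => if v.1.val = 0 then ⟨0, h0⟩ else ⟨r - 1, by omega⟩, ?_, ?_⟩
  · intro k
    by_cases hk : k.val = 0
    · exact ⟨(⟨0, by omega⟩, ⟨0, by omega⟩), Fin.ext (by simp [hk])⟩
    · exact ⟨(⟨1, by omega⟩, ⟨0, by omega⟩), Fin.ext (by simp; omega)⟩
  · rintro ⟨v, -, hi⟩
    have := Fintype.card_le_of_injective _ hi
    simp at this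
    omega

/-- if `m, n ≥ 2` and `m + n` is odd, then `aw(P_m □ P_n, 3) = 4`. -/
theorem aw_eq_four_of_odd (m n : ℕ) (hm : 2 ≤ m) (hn : 2 ≤ n) (hodd : Odd (m + n)) :
    aw (pathGraph m □ pathGraph n) 3 = 4 := by
  unfold aw
  apply le_antisymm
  · exact Nat.sInf_le ⟨by omega, four_rainbow hm hn⟩
  · apply le_csInf
    · exact ⟨4, by omega, four_rainbow hm hn⟩
    · rintro r ⟨h0, hr⟩
      by_contra hlt
      obtain rfl | h3 : r = 3 ∨ r < 3 := by omega
      · obtain ⟨c, hc, hn'⟩ := three_free hm hn hodd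
        exact hn' (hr c hc)
      · obtain ⟨c, hc, hn'⟩ := small_free hm hn h0 h3
        exact hn' (hr c hc)
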